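/- Let Ω ⊆ ℂ be a domain (open connected set) and let f : Ω → ℂ be a non-constant holomorphic function on Ω. Then for every set A ⊆ Ω whose closure is a compact subset of Ω, dim_N A = dim_N f(A) (with the Euclidean metric). -/

import Mathlib

open Set Metric

/-- `S` is `D`-bounded with respect to the distance function `d`:
every two points of `S` are at distance at most `D`. -/
def IsBoundedBy {α : Type*} (d : α → α → ℝ) (S : Set α) (D : ℝ) : Prop :=
  ∀ x ∈ S, ∀ y ∈ S, d x y ≤ D

/-- The Nagata (Assouad–Nagata) dimension of the set `X ⊆ α` with respect to the
distance function `d`, as an element of `ℕ∞`: the infimum of all `n : ℕ` such that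
there is a constant `c > 0` so that for every `s > 0` the set `X` admits a cover by
subsets of diameter at most `c * s` such that every subset of `X` of diameter at
most `s` meets at most `n + 1` members of the cover. -/
noncomputable def nagataDimWith {α : Type*} (d : α → α → ℝ) (X : Set α) : ℕ∞ :=
  sInf {N : ℕ∞ | ∃ n : ℕ, N = (n : ℕ∞) ∧ ∃ c : ℝ, 0 < c ∧ ∀ s : ℝ, 0 < s →
    ∃ B : Set (Set α), (∀ b ∈ B, b ⊆ X) ∧ X ⊆ ⋃₀ B ∧
      (∀ b ∈ B, IsBoundedBy d b (c * s)) ∧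
      ∀ T ⊆ X, IsBoundedBy d T s → {b ∈ B | (T ∩ b).Nonempty}.encard ≤ (n : ℕ∞) + 1}

/-- The Nagata dimension of a subset of a metric space. -/
noncomputable def nagataDim {α : Type*} [PseudoMetricSpace α] (X : Set α) : ℕ∞ :=
  nagataDimWith dist X

/-!
The Nagata dimension is governed by coloured covers: at each scale `s`, `n + 1` sets in which every
`s`-chain has diameter `O(s)`. The existence of such covers is inherited by subsets and finite
unions, so on a compact set it is enough to compare covers of `T` and `f '' T` for all small sets
`T` near each point. There `f` is, up to a bi-Lipschitz change of coordinate and a translation, a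
power map `z ↦ z ^ k` near `0`. Split the plane into finitely many cones, each the union of the
dyadic dilates of a small piece of an annulus. On every single dilate the power map is bi-Lipschitz
up to a scaling factor, with uniform constants, and both in the source and in the target distinct
dilates are separated by a distance proportional to their size. At scale `s` the dilates of size at
most `s` thus form one set of diameter `O(s)`, and the others can be coloured independently.
-/

open Filter Relation Topology

section ChainBounded

variable {α β ι L : Type*} [PseudoMetricSpace α] [PseudoMetricSpace β] {s D : ℝ} {C E X : Set α}

/-- One step of an `s`-chain in `C`: a move of length at most `s` between two points of `C`. -/
def ChainStep (s : ℝ) (C : Set α) (x y : α) : Prop :=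
  x ∈ C ∧ y ∈ C ∧ dist x y ≤ s

/-- Points of `C` joined by an `s`-chain in `C` are at distance at most `D`. Equivalently, `C` is a
union of sets of diameter at most `D`, any two of which are more than `s` apart. -/
def ChainBounded (s D : ℝ) (C : Set α) : Prop :=
  ∀ x ∈ C, ∀ y, ReflTransGen (ChainStep s C) x y → dist x y ≤ D

theorem ChainStep.mono (h : E ⊆ C) {x y : α} (hxy : ChainStep s E x y) : ChainStep s C x y :=
  ⟨h hxy.1, h hxy.2.1, hxy.2.2⟩

theorem ChainStep.symm {x y : α} (h : ChainStep s C x y) : ChainStep s C y x :=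
  ⟨h.2.1, h.1, dist_comm x y ▸ h.2.2⟩

theorem mem_of_chain {x y : α} (hx : x ∈ C) (h : ReflTransGen (ChainStep s C) x y) : y ∈ C := by
  rcases h.cases_tail with rfl | ⟨_, -, hstep⟩
  exacts [hx, hstep.2.1]

theorem ChainBounded.of_dist_le (h : ∀ x ∈ C, ∀ y ∈ C, dist x y ≤ D) : ChainBounded s D C :=
  fun x hx y hxy => h x hx y (mem_of_chain hx hxy)

theorem ChainBounded.mono_set (h : ChainBounded s D C) (hEC : E ⊆ C) : ChainBounded s D E :=
  fun x hx y hxy => h x (hEC hx) y (ReflTransGen.mono (fun _ _ => ChainStep.mono hEC) x y hxy)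

theorem ChainBounded.mono_right {D' : ℝ} (h : ChainBounded s D C) (hD : D ≤ D') :
    ChainBounded s D' C :=
  fun x hx y hxy => (h x hx y hxy).trans hD

theorem ChainBounded.image_of_dist_imp {p : ι → α} {q : ι → β} {I : Set ι} {s' D' : ℝ}
    (h : ChainBounded s D (p '' I))
    (hs : ∀ a ∈ I, ∀ b ∈ I, dist (q a) (q b) ≤ s' → dist (p a) (p b) ≤ s)
    (hD : ∀ a ∈ I, ∀ b ∈ I, dist (p a) (p b) ≤ D → dist (q a) (q b) ≤ D') :
    ChainBounded s' D' (q '' I) := by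
  rintro _ ⟨a, ha, rfl⟩ y hy
  obtain ⟨b, hb, rfl, hab⟩ :
      ∃ b ∈ I, q b = y ∧ ReflTransGen (ChainStep s (p '' I)) (p a) (p b) := by
    induction hy with
    | refl => exact ⟨a, ha, rfl, .refl⟩
    | tail _ hstep ih =>
      obtain ⟨b, hb, rfl, hab⟩ := ih
      obtain ⟨-, ⟨c, hc, rfl⟩, hbc⟩ := hstep
      exact ⟨c, hc, rfl,
        hab.tail ⟨mem_image_of_mem p hb, mem_image_of_mem p hc, hs b hb c hc hbc⟩⟩
  exact hD a ha b hb (h _ (mem_image_of_mem p ha) _ hab)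

theorem ChainBounded.image_of_fibers {q : ι → α} {I : Set ι} (l : ι → L)
    (hl : ∀ a ∈ I, ∀ b ∈ I, dist (q a) (q b) ≤ s → l a = l b)
    (h : ∀ a ∈ I, ChainBounded s D (q '' {b ∈ I | l b = l a})) :
    ChainBounded s D (q '' I) := by
  rintro _ ⟨a, ha, rfl⟩ y hy
  have hmem : ∀ {b}, b ∈ I → l b = l a → q b ∈ q '' {b ∈ I | l b = l a} :=
    fun hb hba => mem_image_of_mem q ⟨hb, hba⟩
  obtain ⟨b, -, -, rfl, hab⟩ : ∃ b ∈ I, l b = l a ∧ q b = y ∧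
      ReflTransGen (ChainStep s (q '' {b ∈ I | l b = l a})) (q a) (q b) := by
    induction hy with
    | refl => exact ⟨a, ha, rfl, rfl, .refl⟩
    | tail _ hstep ih =>
      obtain ⟨b, hb, hba, rfl, hab⟩ := ih
      obtain ⟨-, ⟨c, hc, rfl⟩, hbc⟩ := hstep
      have hca : l c = l a := (hl b hb c hc hbc).symm.trans hba
      exact ⟨c, hc, hca, rfl, hab.tail ⟨hmem hb hba, hmem hc hca, hbc⟩⟩
  exact h a ha _ (hmem ha rfl) _ hab

/-- The point `y` is reached from `x` by an `s`-chain whose points after `x` all lie in `E`. -/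
def ChainedThrough (s : ℝ) (E : Set α) (x y : α) : Prop :=
  x = y ∨ ∃ e ∈ E, dist x e ≤ s ∧ ReflTransGen (ChainStep s E) e y

theorem ChainedThrough.tail {x y z : α} (h : ChainedThrough s E x y) (hz : z ∈ E)
    (hyz : dist y z ≤ s) : ChainedThrough s E x z := by
  rcases h with rfl | ⟨e, he, hxe, hey⟩
  · exact .inr ⟨z, hz, hyz, .refl⟩
  · exact .inr ⟨e, he, hxe, hey.tail ⟨mem_of_chain he hey, hz, hyz⟩⟩

theorem ChainBounded.dist_le_of_chainedThrough (hE : ChainBounded s D E) (hs : 0 ≤ s) (hD : 0 ≤ D)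
    {x y : α} (h : ChainedThrough s E x y) : dist x y ≤ s + D := by
  rcases h with rfl | ⟨e, he, hxe, hey⟩
  · rw [dist_self]
    positivity
  · exact (dist_triangle x e y).trans (add_le_add hxe (hE e he y hey))

-- Between two visits to `C` a chain in `C ∪ E` stays in `E`, where it moves by at most `D`;
-- its visits to `C` therefore form a `(2 * s + D)`-chain.
theorem ChainBounded.chain_union_cases (hE : ChainBounded s D E) (hs : 0 ≤ s) (hD : 0 ≤ D)
    {x y : α} (hx : x ∈ C ∪ E) (hxy : ReflTransGen (ChainStep s (C ∪ E)) x y) :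
    x ∈ E ∧ ReflTransGen (ChainStep s E) x y ∨
      ∃ p ∈ C, ∃ q ∈ C, dist x p ≤ s + D ∧ ReflTransGen (ChainStep (2 * s + D) C) p q ∧
        ChainedThrough s E q y := by
  induction hxy with
  | refl =>
    rcases hx with hx | hx
    · exact .inr ⟨x, hx, x, hx, by rw [dist_self]; positivity, .refl, .inl rfl⟩
    · exact .inl ⟨hx, .refl⟩
  | @tail y z _ hstep ih =>
    obtain ⟨-, hz, hyz⟩ := hstep
    rcases ih with ⟨hxE, hxy⟩ | ⟨p, hp, q, hq, hxp, hpq, hqy⟩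
    · rcases hz with hz | hz
      · have hxz : dist x z ≤ s + D := by
          linarith [dist_triangle x y z, hE x hxE y hxy]
        exact .inr ⟨z, hz, z, hz, hxz, .refl, .inl rfl⟩
      · exact .inl ⟨hxE, hxy.tail ⟨mem_of_chain hxE hxy, hz, hyz⟩⟩
    · rcases hz with hz | hz
      · have hqz : dist q z ≤ 2 * s + D := by
          linarith [dist_triangle q y z, hE.dist_le_of_chainedThrough hs hD hqy]
        exact .inr ⟨p, hp, z, hz, hxp, hpq.tail ⟨hq, hz, hqz⟩, .inl rfl⟩
      · exact .inr ⟨p, hp, q, hq, hxp, hpq, hqy.tail hz hyz⟩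

theorem ChainBounded.union {D' : ℝ} (hC : ChainBounded (2 * s + D) D' C)
    (hE : ChainBounded s D E) (hs : 0 ≤ s) (hD : 0 ≤ D) (hD' : 0 ≤ D') :
    ChainBounded s (2 * (s + D) + D') (C ∪ E) := by
  intro x hx y hxy
  rcases hE.chain_union_cases hs hD hx hxy with ⟨hxE, hxy⟩ | ⟨p, hp, q, -, hxp, hpq, hqy⟩
  · linarith [hE x hxE y hxy]
  · calc dist x y ≤ dist x p + dist p q + dist q y := dist_triangle4 x p q y
      _ ≤ (s + D) + D' + (s + D) := by
        gcongr
        exacts [hC p hp q hpq, hE.dist_le_of_chainedThrough hs hD hqy]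
      _ = 2 * (s + D) + D' := by ring

end ChainBounded

section NagataCovers

variable {α : Type*} {X T T' : Set α} {B : Set (Set α)} {n : ℕ}

/-- The members of the family `B` that meet `T`; the multiplicity of `B` counts them. -/
def membersMeeting (B : Set (Set α)) (T : Set α) : Set (Set α) :=
  {b ∈ B | (T ∩ b).Nonempty}

theorem membersMeeting_mono (h : T ⊆ T') : membersMeeting B T ⊆ membersMeeting B T' :=
  fun _ hb => ⟨hb.1, hb.2.mono (inter_subset_inter_left _ h)⟩

-- A chain of sets that is strict at its first `n + 1` steps gains an element at each of them.
theorem exists_eq_succ_of_encard_le {S : ℕ → Set α} (hS : Monotone S) (h₀ : (S 0).Nonempty)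
    (hn : (S (n + 1)).encard ≤ n + 1) : ∃ i ≤ n, S i = S (i + 1) := by
  by_contra! hne
  have hfin : (S (n + 1)).Finite := finite_of_encard_le_coe (k := n + 1) (mod_cast hn)
  have hcard : ∀ i ≤ n + 1, ((i + 1 : ℕ) : ℕ∞) ≤ (S i).encard := by
    intro i hi
    induction i with
    | zero => simpa [one_le_encard_iff_nonempty] using h₀
    | succ i ih =>
      have hlt : (S i).encard < (S (i + 1)).encard :=
        (hfin.subset (hS (by omega))).encard_lt_encard
          ((hS i.le_succ).ssubset_of_ne (hne i (by omega)))
      push_cast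
      exact Order.add_one_le_of_lt ((ih (by omega)).trans_lt hlt)
  have := (hcard (n + 1) le_rfl).trans hn
  norm_cast at this
  omega

variable [PseudoMetricSpace α]

/-- The condition under the infimum in `nagataDim`. -/
def HasNagataCovers (n : ℕ) (X : Set α) : Prop :=
  ∃ c : ℝ, 0 < c ∧ ∀ s : ℝ, 0 < s →
    ∃ B : Set (Set α), (∀ b ∈ B, b ⊆ X) ∧ X ⊆ ⋃₀ B ∧
      (∀ b ∈ B, IsBoundedBy dist b (c * s)) ∧
      ∀ T ⊆ X, IsBoundedBy dist T s → (membersMeeting B T).encard ≤ (n : ℕ∞) + 1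

/-- At every scale `s`, the set `X` is covered by `n + 1` sets whose `s`-chains have diameter at
most `c * s`, where `c` does not depend on `s`. This is the coloured form of the condition defining
the Nagata dimension; there is one set for each colour. -/
def HasColoredCovers (n : ℕ) (X : Set α) : Prop :=
  ∃ c : ℝ, 0 < c ∧ ∀ s : ℝ, 0 < s →
    ∃ C : Fin (n + 1) → Set α, X ⊆ ⋃ i, C i ∧ ∀ i, ChainBounded s (c * s) (C i)

theorem HasColoredCovers.hasNagataCovers (h : HasColoredCovers n X) : HasNagataCovers n X := by
  obtain ⟨c, hc, h⟩ := h
  refine ⟨c, hc, fun s hs => ?_⟩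
  obtain ⟨C, hXC, hC⟩ := h s hs
  let chains (i : Fin (n + 1)) := ReflTransGen (ChainStep s (X ∩ C i))
  have chains_symm (i) {x y} (hxy : chains i x y) : chains i y x :=
    have : Std.Symm (ChainStep s (X ∩ C i)) := ⟨fun _ _ => ChainStep.symm⟩
    symm_of _ hxy
  refine ⟨{b | ∃ i, ∃ x ∈ X ∩ C i, b = {y | chains i x y}}, ?_, ?_, ?_, ?_⟩
  · rintro _ ⟨i, x, hx, rfl⟩ y hxy
    exact (mem_of_chain hx hxy).1
  · intro x hx
    obtain ⟨i, hi⟩ := mem_iUnion.1 (hXC hx)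
    exact ⟨_, ⟨i, x, ⟨hx, hi⟩, rfl⟩, .refl⟩
  · rintro _ ⟨i, x, hx, rfl⟩ y hxy z hxz
    exact (hC i).mono_set inter_subset_right y (mem_of_chain hx hxy) z
      ((chains_symm i hxy).trans hxz)
  · intro T hTX hT
    -- The components of colour `i` meeting `T` all equal the union of the chains from `T`.
    have hsub : membersMeeting {b | ∃ i, ∃ x ∈ X ∩ C i, b = {y | chains i x y}} T ⊆
        range fun i => {y | ∃ t ∈ T ∩ C i, chains i t y} := by
      rintro _ ⟨⟨i, x, hx, rfl⟩, t, htT, hxt⟩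
      have ht := mem_of_chain hx hxt
      refine ⟨i, Subset.antisymm ?_ fun y hxy => ⟨t, ⟨htT, ht.2⟩, (chains_symm i hxt).trans hxy⟩⟩
      rintro y ⟨u, ⟨huT, hu⟩, huy⟩
      exact (hxt.tail ⟨ht, ⟨hTX huT, hu⟩, hT t htT u huT⟩).trans huy
    calc _ ≤ _ := encard_le_encard hsub
      _ ≤ (univ : Set (Fin (n + 1))).encard := by
        rw [← image_univ]
        exact encard_image_le _ _
      _ = n + 1 := by simp

-- Around each point of `X` there is a gap: a level `i ≤ n` such that growing the radius from
-- `(i + 1) * t` to `(i + 2) * t` meets no new member of `B`. Take the members met at that level;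
-- of two nearby points, the one with the larger level then sees all that the other one sees.
theorem exists_locally_nested_members {t : ℝ} (ht : 0 < t) (hXB : X ⊆ ⋃₀ B)
    (hn : ∀ x ∈ X, (membersMeeting B (ball x ((n + 2) * t))).encard ≤ n + 1) :
    ∃ S : α → Set (Set α),
      (∀ x ∈ X, (S x).Nonempty ∧ (S x).encard ≤ n + 1 ∧
        S x ⊆ membersMeeting B (ball x ((n + 1) * t))) ∧
      ∀ x ∈ X, ∀ y ∈ X, dist x y ≤ t → S x ⊆ S y ∨ S y ⊆ S x := by
  let M (x : α) (i : ℕ) : Set (Set α) := membersMeeting B (ball x ((i + 1) * t))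
  have M_mono (x) : Monotone (M x) := fun i j hij =>
    membersMeeting_mono (ball_subset_ball (by gcongr))
  have M_shift {x y} (hxy : dist x y ≤ t) (i) : M x i ⊆ M y (i + 1) :=
    membersMeeting_mono (ball_subset_ball' (by push_cast; linarith))
  have M_nonempty {x} (hx : x ∈ X) (i) : (M x i).Nonempty := by
    obtain ⟨b, hb, hxb⟩ := hXB hx
    exact ⟨b, hb, x, mem_ball_self (by positivity), hxb⟩
  have M_encard_le {x} (hx : x ∈ X) {i} (hi : i ≤ n + 1) : (M x i).encard ≤ n + 1 := by
    have hrad : ((i : ℝ) + 1) * t ≤ (n + 2) * t := by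
      have : (i : ℝ) ≤ n + 1 := mod_cast hi
      gcongr ?_ * t
      linarith
    exact (encard_le_encard (membersMeeting_mono (ball_subset_ball hrad))).trans (hn x hx)
  have gap : ∀ x ∈ X, ∃ i ≤ n, M x i = M x (i + 1) := fun x hx =>
    exists_eq_succ_of_encard_le (M_mono x) (M_nonempty hx 0) (M_encard_le hx le_rfl)
  choose! i hi hgap using gap
  have nested {x y} (hy : y ∈ X) (hxy : dist x y ≤ t) (hle : i x ≤ i y) :
      M x (i x) ⊆ M y (i y) :=
    calc M x (i x) ⊆ M y (i x + 1) := M_shift hxy (i x)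
      _ ⊆ M y (i y + 1) := M_mono y (by omega)
      _ = M y (i y) := (hgap y hy).symm
  refine ⟨fun x => M x (i x), fun x hx => ⟨M_nonempty hx _, ?_, M_mono x (hi x hx)⟩, ?_⟩
  · exact M_encard_le hx ((hi x hx).trans n.le_succ)
  · intro x hx y hy hxy
    exact (le_total (i x) (i y)).imp (nested hy hxy) (nested hx (dist_comm x y ▸ hxy))

theorem dist_le_of_mem_membersMeeting {x y : α} {b : Set α} {r D : ℝ} (hD : IsBoundedBy dist b D)
    (hx : b ∈ membersMeeting B (ball x r)) (hy : b ∈ membersMeeting B (ball y r)) :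
    dist x y ≤ 2 * r + D := by
  obtain ⟨-, x', hxx', hx'⟩ := hx
  obtain ⟨-, y', hyy', hy'⟩ := hy
  rw [mem_ball'] at hxx'
  rw [mem_ball] at hyy'
  linarith [dist_triangle4 x x' y' y, hD x' hx' y' hy']

theorem exists_chainBounded_cover {t D : ℝ} (ht : 0 < t) (hXB : X ⊆ ⋃₀ B)
    (hD : ∀ b ∈ B, IsBoundedBy dist b D)
    (hn : ∀ x ∈ X, (membersMeeting B (ball x ((n + 2) * t))).encard ≤ n + 1) :
    ∃ C : Fin (n + 1) → Set α, X ⊆ ⋃ i, C i ∧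
      ∀ i, ChainBounded t (2 * ((n + 1) * t) + D) (C i) := by
  obtain ⟨S, hS, hnested⟩ := exists_locally_nested_members ht hXB hn
  have hfin {x} (hx : x ∈ X) : (S x).Finite :=
    finite_of_encard_le_coe (k := n + 1) (mod_cast (hS x hx).2.1)
  refine ⟨fun k => {x ∈ X | (S x).ncard = k + 1}, fun x hx => ?_, fun k => ?_⟩
  · obtain ⟨hne, hle, -⟩ := hS x hx
    have hpos : 0 < (S x).ncard := (ncard_pos (hfin hx)).2 hne
    have hle : (S x).ncard ≤ n + 1 := by
      rw [← (hfin hx).cast_ncard_eq] at hle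
      exact_mod_cast hle
    exact mem_iUnion.2 ⟨⟨(S x).ncard - 1, by omega⟩, hx, (Nat.sub_add_cancel hpos).symm⟩
  · suffices h : ChainBounded t (2 * ((n + 1) * t) + D) (id '' {x ∈ X | (S x).ncard = k + 1}) by
      rwa [image_id] at h
    refine .image_of_fibers S ?_ fun z _ => .of_dist_le ?_
    · rintro x ⟨hx, hxk⟩ y ⟨hy, hyk⟩ hxy
      rcases hnested x hx y hy hxy with hsub | hsub
      · exact eq_of_subset_of_ncard_le hsub (hyk.trans hxk.symm).le (hfin hy)
      · exact (eq_of_subset_of_ncard_le hsub (hxk.trans hyk.symm).le (hfin hx)).symm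
    · rintro _ ⟨x, ⟨⟨hx, -⟩, hxz⟩, rfl⟩ _ ⟨y, ⟨⟨hy, -⟩, hyz⟩, rfl⟩
      obtain ⟨⟨b, hbx⟩, -, hSx⟩ := hS x hx
      have hby : b ∈ S y := hyz.trans hxz.symm ▸ hbx
      exact dist_le_of_mem_membersMeeting (hD b (hSx hbx).1) (hSx hbx) ((hS y hy).2.2 hby)

theorem HasNagataCovers.hasColoredCovers (h : HasNagataCovers n X) : HasColoredCovers n X := by
  obtain ⟨c, hc, h⟩ := h
  refine ⟨2 * (n + 1) + c * (2 * (n + 2)), by positivity, fun t ht => ?_⟩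
  obtain ⟨B, hBX, hXB, hD, hn⟩ := h (2 * ((n + 2) * t)) (by positivity)
  convert exists_chainBounded_cover ht hXB hD fun x _ => ?_ using 6
  · ring
  · have hmeet : membersMeeting B (ball x ((n + 2) * t)) ⊆
        membersMeeting B (X ∩ ball x ((n + 2) * t)) := by
      rintro b ⟨hb, y, hxy, hy⟩
      exact ⟨hb, y, ⟨hBX b hb hy, hxy⟩, hy⟩
    refine (encard_le_encard hmeet).trans (hn _ inter_subset_left ?_)
    rintro y ⟨-, hy⟩ z ⟨-, hz⟩
    rw [mem_ball] at hy hz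
    linarith [dist_triangle_right y z x]

theorem hasNagataCovers_iff_hasColoredCovers : HasNagataCovers n X ↔ HasColoredCovers n X :=
  ⟨HasNagataCovers.hasColoredCovers, HasColoredCovers.hasNagataCovers⟩

theorem nagataDim_eq_sInf :
    nagataDim X = sInf {N : ℕ∞ | ∃ n : ℕ, N = n ∧ HasColoredCovers n X} := by
  simp only [← hasNagataCovers_iff_hasColoredCovers]
  rfl

end NagataCovers

section ColoredCovers

variable {α β γ ι J : Type*} [PseudoMetricSpace α] [PseudoMetricSpace β] [PseudoMetricSpace γ]
  {n : ℕ}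

theorem HasColoredCovers.mono {X Y : Set α} (h : HasColoredCovers n X) (hYX : Y ⊆ X) :
    HasColoredCovers n Y := by
  obtain ⟨c, hc, h⟩ := h
  refine ⟨c, hc, fun s hs => ?_⟩
  obtain ⟨C, hXC, hC⟩ := h s hs
  exact ⟨C, hYX.trans hXC, hC⟩

theorem HasColoredCovers.of_subsingleton {X : Set α} (hX : X.Subsingleton) :
    HasColoredCovers n X := by
  refine ⟨1, one_pos, fun s hs => ⟨fun _ => X, subset_iUnion_of_subset 0 subset_rfl, fun _ =>
    .of_dist_le fun x hx y hy => ?_⟩⟩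
  rw [hX hx hy, dist_self]
  positivity

theorem HasColoredCovers.union {X Y : Set α} (hX : HasColoredCovers n X)
    (hY : HasColoredCovers n Y) : HasColoredCovers n (X ∪ Y) := by
  obtain ⟨cX, hcX, hX⟩ := hX
  obtain ⟨cY, hcY, hY⟩ := hY
  refine ⟨2 * (1 + cY) + cX * (2 + cY), by positivity, fun s hs => ?_⟩
  obtain ⟨C, hXC, hC⟩ := hX (2 * s + cY * s) (by positivity)
  obtain ⟨E, hYE, hE⟩ := hY s hs
  refine ⟨fun i => C i ∪ E i, ?_, fun i => ?_⟩
  · rw [iUnion_union_distrib]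
    exact union_subset_union hXC hYE
  · convert (hC i).union (hE i) hs.le (by positivity) (by positivity) using 1
    ring

theorem ChainBounded.image_of_scaling {p : ι → α} {q : ι → β} {I : Set ι} {r K s D : ℝ}
    (hr : 0 < r) (hK : 0 < K)
    (hq : ∀ a ∈ I, ∀ b ∈ I, dist (q a) (q b) ≤ K * (r * dist (p a) (p b)))
    (hp : ∀ a ∈ I, ∀ b ∈ I, r * dist (p a) (p b) ≤ K * dist (q a) (q b))
    (h : ChainBounded (K * s / r) D (p '' I)) : ChainBounded s (K * (r * D)) (q '' I) := by
  refine h.image_of_dist_imp ?_ ?_ <;> intro a ha b hb hab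
  · rw [le_div_iff₀' hr]
    exact (hp a ha b hb).trans (by gcongr)
  · exact (hq a ha b hb).trans (by gcongr)

theorem HasColoredCovers.image_of_lipschitz {p : ι → α} {q : ι → β} {I : Set ι} {K : ℝ}
    (hK : 0 < K) (hq : ∀ a ∈ I, ∀ b ∈ I, dist (q a) (q b) ≤ K * dist (p a) (p b))
    (hp : ∀ a ∈ I, ∀ b ∈ I, dist (p a) (p b) ≤ K * dist (q a) (q b))
    (h : HasColoredCovers n (p '' I)) : HasColoredCovers n (q '' I) := by
  obtain ⟨c, hc, h⟩ := h
  refine ⟨K * (1 * (c * K)), by positivity, fun s hs => ?_⟩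
  obtain ⟨C, hpC, hC⟩ := h (K * s / 1) (by positivity)
  refine ⟨fun i => q '' {a ∈ I | p a ∈ C i}, ?_, fun i => ?_⟩
  · rintro _ ⟨a, ha, rfl⟩
    obtain ⟨i, hi⟩ := mem_iUnion.1 (hpC (mem_image_of_mem p ha))
    exact mem_iUnion.2 ⟨i, a, ⟨ha, hi⟩, rfl⟩
  · have hsub : p '' {a ∈ I | p a ∈ C i} ⊆ C i := image_subset_iff.2 fun a ha => ha.2
    convert ((hC i).mono_set hsub).image_of_scaling one_pos hK (q := q) ?_ ?_ using 1
    · ring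
    · simpa only [one_mul] using fun a ha b hb => hq a ha.1 b hb.1
    · simpa only [one_mul] using fun a ha b hb => hp a ha.1 b hb.1

-- The pieces of size at most `s` form a single set of diameter at most `L * s`; an `s`-chain in the
-- rest never leaves its piece.
theorem ChainBounded.image_of_separated_pieces {q : ι → β} {I : Set ι} (piece : ι → J)
    {size : J → ℝ} {L s D : ℝ} (hL : 0 ≤ L) (hs : 0 ≤ s) (hD : 0 ≤ D)
    (hsep : ∀ a ∈ I, ∀ b ∈ I, piece a ≠ piece b →
      max (size (piece a)) (size (piece b)) ≤ dist (q a) (q b))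
    (hdiam : ∀ a ∈ I, ∀ b ∈ I, dist (q a) (q b) ≤ L * max (size (piece a)) (size (piece b)))
    (h : ∀ a ∈ I, ChainBounded s D (q '' {b ∈ I | piece b = piece a})) :
    ChainBounded s (L * s + D) (q '' I) := by
  classical
  let label (a : ι) : Option J := if size (piece a) ≤ s then none else some (piece a)
  refine .image_of_fibers label ?_ ?_
  · intro a ha b hb hab
    by_cases hpiece : piece a = piece b
    · simp only [label, hpiece]
    · have := max_le_iff.1 ((hsep a ha b hb hpiece).trans hab)
      simp only [label, if_pos this.1, if_pos this.2]
  · intro z hz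
    by_cases hsize : size (piece z) ≤ s
    · have small {a} (ha : label a = label z) : size (piece a) ≤ s := by
        by_contra hlarge
        simp only [label, if_pos hsize, if_neg hlarge, reduceCtorEq] at ha
      refine .of_dist_le ?_
      rintro _ ⟨a, ⟨ha, haz⟩, rfl⟩ _ ⟨b, ⟨hb, hbz⟩, rfl⟩
      calc dist (q a) (q b) ≤ L * max (size (piece a)) (size (piece b)) := hdiam a ha b hb
        _ ≤ L * s := by
          gcongr
          exact max_le (small haz) (small hbz)
        _ ≤ L * s + D := le_add_of_nonneg_right hD
    · have same {a} (ha : label a = label z) : piece a = piece z := by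
        by_cases hsmall : size (piece a) ≤ s
        · simp only [label, if_neg hsize, if_pos hsmall, reduceCtorEq] at ha
        · simpa only [label, if_neg hsize, if_neg hsmall, Option.some_inj] using ha
      exact ((h z hz).mono_set (image_mono fun a ha => ⟨ha.1, same ha.2⟩)).mono_right
        (le_add_of_nonneg_left (by positivity))

theorem HasColoredCovers.image_of_piecewise_scaling {p : ι → α} {q : ι → β} {I : Set ι}
    (piece : ι → J) {factor size : J → ℝ} {K L : ℝ} (hK : 0 < K) (hL : 0 ≤ L)
    (hfactor : ∀ j, 0 < factor j)
    (hq : ∀ a ∈ I, ∀ b ∈ I, piece a = piece b →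
      dist (q a) (q b) ≤ K * (factor (piece a) * dist (p a) (p b)))
    (hp : ∀ a ∈ I, ∀ b ∈ I, piece a = piece b →
      factor (piece a) * dist (p a) (p b) ≤ K * dist (q a) (q b))
    (hsep : ∀ a ∈ I, ∀ b ∈ I, piece a ≠ piece b →
      max (size (piece a)) (size (piece b)) ≤ dist (q a) (q b))
    (hdiam : ∀ a ∈ I, ∀ b ∈ I, dist (q a) (q b) ≤ L * max (size (piece a)) (size (piece b)))
    (h : HasColoredCovers n (p '' I)) : HasColoredCovers n (q '' I) := by
  obtain ⟨c, hc, h⟩ := h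
  refine ⟨L + K * (c * K), by positivity, fun s hs => ?_⟩
  choose C hpC hC using fun j => h (K * s / factor j) (div_pos (by positivity) (hfactor j))
  refine ⟨fun i => q '' {a ∈ I | p a ∈ C (piece a) i}, ?_, fun i => ?_⟩
  · rintro _ ⟨a, ha, rfl⟩
    obtain ⟨i, hi⟩ := mem_iUnion.1 (hpC (piece a) (mem_image_of_mem p ha))
    exact mem_iUnion.2 ⟨i, a, ⟨ha, hi⟩, rfl⟩
  · rw [add_mul]
    refine .image_of_separated_pieces piece hL hs.le (by positivity)
      (fun a ha b hb => hsep a ha.1 b hb.1) (fun a ha b hb => hdiam a ha.1 b hb.1) fun z _ => ?_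
    have hsub : p '' {b ∈ {a ∈ I | p a ∈ C (piece a) i} | piece b = piece z} ⊆ C (piece z) i := by
      rintro _ ⟨b, ⟨⟨-, hb⟩, hbz⟩, rfl⟩
      exact hbz ▸ hb
    convert ((hC (piece z) i).mono_set hsub).image_of_scaling (q := q) (hfactor (piece z)) hK
      ?_ ?_ using 1
    · have := (hfactor (piece z)).ne'
      field_simp
    · rintro a ⟨⟨ha, -⟩, haz⟩ b ⟨⟨hb, -⟩, hbz⟩
      exact haz ▸ hq a ha b hb (haz.trans hbz.symm)
    · rintro a ⟨⟨ha, -⟩, haz⟩ b ⟨⟨hb, -⟩, hbz⟩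
      exact haz ▸ hp a ha b hb (haz.trans hbz.symm)

/-- The map `f` is bi-Lipschitz on `S`, with the constant `K` in both directions. A real constant
fits the distance estimates better than the `NNReal` one of `LipschitzOnWith`. -/
def BilipschitzOn (K : ℝ) (f : α → β) (S : Set α) : Prop :=
  ∀ x ∈ S, ∀ y ∈ S, dist (f x) (f y) ≤ K * dist x y ∧ dist x y ≤ K * dist (f x) (f y)

/-- The map `f` preserves, for every `n`, the existence of coloured covers of order `n` of all
subsets of `S`. Unlike a statement about `S` alone, this is inherited by finite unions. -/
def PreservesColoredCovers (f : α → β) (S : Set α) : Prop :=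
  ∀ T ⊆ S, ∀ n, HasColoredCovers n T ↔ HasColoredCovers n (f '' T)

namespace PreservesColoredCovers

variable {f : α → β} {g : β → γ} {S S' T : Set α}

theorem nagataDim_image (h : PreservesColoredCovers f S) (hT : T ⊆ S) :
    nagataDim (f '' T) = nagataDim T := by
  simp only [nagataDim_eq_sInf, h T hT]

theorem mono (h : PreservesColoredCovers f S) (hS : S' ⊆ S) : PreservesColoredCovers f S' :=
  fun T hT => h T (hT.trans hS)

theorem of_subsingleton (hS : S.Subsingleton) : PreservesColoredCovers f S :=
  fun _ hT _ => ⟨fun _ => .of_subsingleton ((hS.anti hT).image f),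
    fun _ => .of_subsingleton (hS.anti hT)⟩

theorem union (h : PreservesColoredCovers f S) (h' : PreservesColoredCovers f S') :
    PreservesColoredCovers f (S ∪ S') := by
  intro T hT n
  have hTS := h (T ∩ S) inter_subset_right n
  have hTS' := h' (T ∩ S') inter_subset_right n
  have hsplit : T = T ∩ S ∪ T ∩ S' := by rw [← inter_union_distrib_left, inter_eq_left.2 hT]
  constructor <;> intro hcov
  · rw [hsplit, image_union]
    exact (hTS.1 (hcov.mono inter_subset_left)).union (hTS'.1 (hcov.mono inter_subset_left))
  · rw [hsplit]
    exact (hTS.2 (hcov.mono (image_mono inter_subset_left))).union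
      (hTS'.2 (hcov.mono (image_mono inter_subset_left)))

theorem of_isCompact (hS : IsCompact S) (h : ∀ x ∈ S, ∃ U ∈ 𝓝 x, PreservesColoredCovers f U) :
    PreservesColoredCovers f S :=
  hS.induction_on (of_subsingleton subsingleton_empty) (fun _ _ hsub h => h.mono hsub)
    (fun _ _ => union) fun x hx =>
      let ⟨U, hU, hf⟩ := h x hx
      ⟨U, mem_nhdsWithin_of_mem_nhds hU, hf⟩

theorem congr {f' : α → β} (h : PreservesColoredCovers f S) (hff' : EqOn f f' S) :
    PreservesColoredCovers f' S :=
  fun T hT n => (hff'.mono hT).image_eq ▸ h T hT n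

theorem comp (hg : PreservesColoredCovers g (f '' S)) (hf : PreservesColoredCovers f S) :
    PreservesColoredCovers (g ∘ f) S := by
  intro T hT n
  rw [image_comp]
  exact (hf T hT n).trans (hg _ (image_mono hT) n)

theorem of_bilipschitzOn {K : ℝ} (hK : 0 < K) (hf : BilipschitzOn K f S) :
    PreservesColoredCovers f S := by
  intro T hT n
  have hle := fun x hx y hy => (hf x (hT hx) y (hT hy)).1
  have hge := fun x hx y hy => (hf x (hT hx) y (hT hy)).2
  constructor <;> intro h
  · exact .image_of_lipschitz (p := id) hK hle hge (by rwa [image_id])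
  · simpa only [image_id] using h.image_of_lipschitz (q := id) hK hge hle

end PreservesColoredCovers

theorem exists_bilipschitzOn_of_hasStrictDerivAt {𝕜 E : Type*} [NontriviallyNormedField 𝕜]
    [NormedAddCommGroup E] [NormedSpace 𝕜 E] {f : 𝕜 → E} {f' : E} {x : 𝕜}
    (hf : HasStrictDerivAt f f' x) (hf' : f' ≠ 0) :
    ∃ K > 0, ∃ V ∈ 𝓝 x, BilipschitzOn K f V := by
  obtain ⟨hupper, hlower⟩ := hf.isTheta_sub hf'
  obtain ⟨K, hK, hupper⟩ := hupper.exists_pos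
  obtain ⟨K', -, hlower⟩ := hlower.exists_pos
  have hev := hupper.bound.and hlower.bound
  rw [nhds_prod_eq] at hev
  obtain ⟨V, hV, h⟩ := mem_prod_self_iff.1 hev
  refine ⟨max K K', lt_max_of_lt_left hK, V, hV, fun y hy z hz => ?_⟩
  obtain ⟨hle, hge⟩ := h (mk_mem_prod hy hz)
  simp only [dist_eq_norm]
  exact ⟨hle.trans (mul_le_mul_of_nonneg_right (le_max_left _ _) (norm_nonneg _)),
    hge.trans (mul_le_mul_of_nonneg_right (le_max_right _ _) (norm_nonneg _))⟩

end ColoredCovers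

section PowerMap

variable {ι E F : Type*} [NormedAddCommGroup E] [NormedSpace ℝ E] [NormedAddCommGroup F]
  [NormedSpace ℝ F] {n : ℕ}

theorem mul_max_zpow_le_dist_zpow_smul {b m M : ℝ} {x y : F} {i j : ℤ} (hb : 1 < b)
    (hx : ‖x‖ ∈ Icc m M) (hy : ‖y‖ ∈ Icc m M) (hij : i ≠ j) :
    (m - M / b) * max (b ^ i) (b ^ j) ≤ dist (b ^ i • x) (b ^ j • y) := by
  wlog hlt : i < j generalizing i j x y
  · rw [max_comm, dist_comm]
    exact this hy hx hij.symm (lt_of_le_of_ne (not_lt.1 hlt) hij.symm)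
  have hb₀ : 0 < b := by positivity
  have : 0 ≤ M := (norm_nonneg x).trans hx.2
  have hpow : b ^ i ≤ b ^ j / b := by
    rw [div_eq_mul_inv, ← zpow_sub_one₀ hb₀.ne']
    exact zpow_le_zpow_right₀ hb.le (by omega)
  calc (m - M / b) * max (b ^ i) (b ^ j) = b ^ j * m - b ^ j / b * M := by
        rw [max_eq_right (zpow_le_zpow_right₀ hb.le hlt.le)]
        ring
    _ ≤ b ^ j * ‖y‖ - b ^ i * ‖x‖ := by
        gcongr
        exacts [hy.1, hx.2]
    _ = ‖b ^ j • y‖ - ‖b ^ i • x‖ := by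
        simp only [norm_smul, norm_zpow, Real.norm_of_nonneg hb₀.le]
    _ ≤ dist (b ^ i • x) (b ^ j • y) := by
        rw [dist_comm, dist_eq_norm]
        exact norm_sub_norm_le _ _

theorem dist_zpow_smul_le_mul_max {b M : ℝ} {x y : F} (hb : 0 < b) (hx : ‖x‖ ≤ M) (hy : ‖y‖ ≤ M)
    (i j : ℤ) : dist (b ^ i • x) (b ^ j • y) ≤ 2 * M * max (b ^ i) (b ^ j) := by
  have : 0 ≤ M := (norm_nonneg x).trans hx
  calc dist (b ^ i • x) (b ^ j • y) ≤ ‖b ^ i • x‖ + ‖b ^ j • y‖ := dist_le_norm_add_norm _ _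
    _ = b ^ i * ‖x‖ + b ^ j * ‖y‖ := by
        simp only [norm_smul, norm_zpow, Real.norm_of_nonneg hb.le]
    _ ≤ max (b ^ i) (b ^ j) * M + max (b ^ i) (b ^ j) * M := by
        gcongr
        exacts [le_max_left _ _, le_max_right _ _]
    _ = 2 * M * max (b ^ i) (b ^ j) := by ring

theorem dist_zpow_smul {c : ℝ} (hc : 0 < c) (j : ℤ) (x y : F) :
    dist (c ^ j • x) (c ^ j • y) = c ^ j * dist x y := by
  rw [dist_smul₀, Real.norm_of_nonneg (by positivity)]

theorem HasColoredCovers.image_zpow_smul {φ : ι → E} {ψ : ι → F} {I : Set (ℤ × ι)}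
    {a b m M K : ℝ} (ha : 0 < a) (hb : 1 < b) (hM : 0 ≤ M) (hMb : M < m * b) (hK : 0 < K)
    (hnorm : ∀ v ∈ I, ‖ψ v.2‖ ∈ Icc m M)
    (hψ : ∀ v ∈ I, ∀ w ∈ I, dist (ψ v.2) (ψ w.2) ≤ K * dist (φ v.2) (φ w.2))
    (hφ : ∀ v ∈ I, ∀ w ∈ I, dist (φ v.2) (φ w.2) ≤ K * dist (ψ v.2) (ψ w.2))
    (h : HasColoredCovers n ((fun v => a ^ v.1 • φ v.2) '' I)) :
    HasColoredCovers n ((fun v => b ^ v.1 • ψ v.2) '' I) := by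
  have hb₀ : 0 < b := by positivity
  have hgap : 0 < m - M / b := sub_pos.2 ((div_lt_iff₀ hb₀).2 hMb)
  have hfactor (j : ℤ) : b ^ j / a ^ j * a ^ j = b ^ j := div_mul_cancel₀ _ (by positivity)
  refine h.image_of_piecewise_scaling Prod.fst (factor := fun j => b ^ j / a ^ j)
    (size := fun j => (m - M / b) * b ^ j) (L := 2 * M / (m - M / b)) hK (by positivity)
    (fun j => by positivity) ?_ ?_ ?_ ?_
  · rintro ⟨i, x⟩ hx ⟨j, y⟩ hy (rfl : i = j)
    simp only [dist_zpow_smul ha, dist_zpow_smul hb₀]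
    rw [← mul_assoc (b ^ i / a ^ i), hfactor, mul_left_comm]
    gcongr
    exact hψ _ hx _ hy
  · rintro ⟨i, x⟩ hx ⟨j, y⟩ hy (rfl : i = j)
    simp only [dist_zpow_smul ha, dist_zpow_smul hb₀]
    rw [← mul_assoc (b ^ i / a ^ i), hfactor, mul_left_comm]
    gcongr
    exact hφ _ hx _ hy
  · rintro ⟨i, x⟩ hx ⟨j, y⟩ hy hij
    rw [← mul_max_of_nonneg _ _ hgap.le]
    exact mul_max_zpow_le_dist_zpow_smul hb (hnorm _ hx) (hnorm _ hy) hij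
  · rintro ⟨i, x⟩ hx ⟨j, y⟩ hy
    rw [← mul_max_of_nonneg _ _ hgap.le, ← mul_assoc, div_mul_cancel₀ _ hgap.ne']
    exact dist_zpow_smul_le_mul_max hb₀ (hnorm _ hx).2 (hnorm _ hy).2 i j

/-- The union of all dilates of `V` by integer powers of `2`. When `V` is small, a power map is
bi-Lipschitz up to scaling on each of the dilates. -/
def dyadicCone (V : Set E) : Set E :=
  (fun v : ℤ × E => (2 : ℝ) ^ v.1 • v.2) '' {v | v.2 ∈ V}

theorem dyadicCone_empty : dyadicCone (∅ : Set E) = ∅ :=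
  image_empty _

theorem dyadicCone_mono {V W : Set E} (h : V ⊆ W) : dyadicCone V ⊆ dyadicCone W :=
  image_mono fun _ hv => h hv

theorem dyadicCone_union (V W : Set E) : dyadicCone (V ∪ W) = dyadicCone V ∪ dyadicCone W :=
  image_union ..

theorem dyadicCone_annulus_union_zero :
    dyadicCone (closedBall (0 : E) 2 \ ball 0 1) ∪ {0} = univ := by
  refine eq_univ_of_forall fun x => ?_
  rcases eq_or_ne x 0 with rfl | hx
  · exact .inr rfl
  obtain ⟨j, hj, hj'⟩ := exists_mem_Ico_zpow (norm_pos_iff.2 hx) one_lt_two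
  have hpow : (0 : ℝ) < 2 ^ j := by positivity
  refine .inl ⟨(j, (2 ^ j : ℝ)⁻¹ • x), ?_, smul_inv_smul₀ hpow.ne' x⟩
  have hnorm : ‖(2 ^ j : ℝ)⁻¹ • x‖ = ‖x‖ / 2 ^ j := by
    rw [norm_smul, norm_inv, Real.norm_of_nonneg hpow.le, inv_mul_eq_div]
  simp only [mem_ofPred_eq, Set.mem_sdiff, mem_closedBall_zero_iff, mem_ball_zero_iff, not_lt,
    hnorm]
  rw [div_le_iff₀ hpow, le_div_iff₀ hpow, one_mul, mul_comm, ← zpow_add_one₀ two_ne_zero]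
  exact ⟨hj'.le, hj⟩

theorem preservesColoredCovers_pow_dyadicCone {k : ℕ} (hk : k ≠ 0) {V : Set ℂ} {K m M : ℝ}
    (hK : 0 < K) (hV : BilipschitzOn K (· ^ k) V) (hm : 0 ≤ m) (hM : 0 ≤ M) (hmM : M < m * 2)
    (hnorm : ∀ v ∈ V, ‖v‖ ∈ Icc m M) :
    PreservesColoredCovers (· ^ k) (dyadicCone V) := by
  intro T hT n
  obtain ⟨I, hI, rfl⟩ := subset_image_iff.1 hT
  have hpow : (· ^ k) '' ((fun v : ℤ × ℂ => (2 : ℝ) ^ v.1 • v.2) '' I) =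
      (fun v : ℤ × ℂ => ((2 : ℝ) ^ k) ^ v.1 • v.2 ^ k) '' I := by
    rw [image_image]
    refine image_congr fun v _ => ?_
    rw [smul_pow, ← zpow_natCast, ← zpow_natCast 2 k, zpow_comm]
  have hle := fun v (hv : v ∈ I) w (hw : w ∈ I) => (hV v.2 (hI hv) w.2 (hI hw)).1
  have hge := fun v (hv : v ∈ I) w (hw : w ∈ I) => (hV v.2 (hI hv) w.2 (hI hw)).2
  have hnorm_pow : ∀ v ∈ I, ‖v.2 ^ k‖ ∈ Icc (m ^ k) (M ^ k) := fun v hv => by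
    obtain ⟨hmv, hvM⟩ := hnorm v.2 (hI hv)
    rw [norm_pow]
    exact ⟨by gcongr, by gcongr⟩
  have hmM_pow : M ^ k < m ^ k * 2 ^ k := by
    rw [← mul_pow]
    exact pow_lt_pow_left₀ hmM hM hk
  rw [hpow]
  constructor <;> intro h
  · exact h.image_zpow_smul (φ := id) (ψ := (· ^ k)) two_pos (one_lt_pow₀ one_lt_two hk)
      (by positivity) hmM_pow hK hnorm_pow hle hge
  · exact h.image_zpow_smul (φ := (· ^ k)) (ψ := id) (by positivity) one_lt_two hM hmM hK
      (fun v hv => hnorm v.2 (hI hv)) hge hle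

theorem exists_preservesColoredCovers_pow_dyadicCone {k : ℕ} (hk : k ≠ 0) {u : ℂ} (hu : u ≠ 0) :
    ∃ V ∈ 𝓝 u, PreservesColoredCovers (· ^ k) (dyadicCone V) := by
  have hu' : 0 < ‖u‖ := norm_pos_iff.2 hu
  obtain ⟨K, hK, V, hV, hbilip⟩ := exists_bilipschitzOn_of_hasStrictDerivAt
    (hasStrictDerivAt_pow k u) (mul_ne_zero (Nat.cast_ne_zero.2 hk) (pow_ne_zero _ hu))
  have hnorm : {v : ℂ | ‖v‖ ∈ Icc (3 / 4 * ‖u‖) (5 / 4 * ‖u‖)} ∈ 𝓝 u :=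
    continuousAt_id.norm (Icc_mem_nhds (by simp only [id]; linarith) (by simp only [id]; linarith))
  exact ⟨_, inter_mem hV hnorm, preservesColoredCovers_pow_dyadicCone hk hK
    (fun v hv w hw => hbilip v hv.1 w hw.1) (by positivity) (by positivity) (by linarith)
    fun v hv => hv.2⟩

theorem preservesColoredCovers_pow_univ {k : ℕ} (hk : k ≠ 0) :
    PreservesColoredCovers (fun z : ℂ => z ^ k) univ := by
  have hannulus : IsCompact (closedBall (0 : ℂ) 2 \ ball 0 1) :=
    (isCompact_closedBall 0 2).diff isOpen_ball
  have hcone : PreservesColoredCovers (fun z : ℂ => z ^ k)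
      (dyadicCone (closedBall (0 : ℂ) 2 \ ball 0 1)) := by
    refine hannulus.induction_on
      (p := fun V => PreservesColoredCovers (fun z : ℂ => z ^ k) (dyadicCone V))
      ?_ (fun V W hVW h => h.mono (dyadicCone_mono hVW)) (fun V W hV hW => ?_) fun u hu => ?_
    · rw [dyadicCone_empty]
      exact .of_subsingleton subsingleton_empty
    · rw [dyadicCone_union]
      exact hV.union hW
    · have hu₀ : u ≠ 0 := by
        rintro rfl
        exact hu.2 (mem_ball_self one_pos)
      obtain ⟨V, hV, h⟩ := exists_preservesColoredCovers_pow_dyadicCone hk hu₀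
      exact ⟨V, mem_nhdsWithin_of_mem_nhds hV, h⟩
  rw [← dyadicCone_annulus_union_zero]
  exact hcone.union (.of_subsingleton subsingleton_singleton)

end PowerMap

section Holomorphic

variable {f g : ℂ → ℂ} {z₀ : ℂ}

theorem exists_analyticAt_pow_eq {k : ℕ} (hk : k ≠ 0) (hg : AnalyticAt ℂ g z₀) (hg₀ : g z₀ ≠ 0) :
    ∃ h : ℂ → ℂ, AnalyticAt ℂ h z₀ ∧ ∀ z, h z ^ k = g z := by
  refine ⟨fun z => g z₀ ^ (k⁻¹ : ℂ) * (g z / g z₀) ^ (k⁻¹ : ℂ), ?_, fun z => ?_⟩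
  · have hslit : g z₀ / g z₀ ∈ Complex.slitPlane := by
      rw [div_self hg₀]
      exact Complex.one_mem_slitPlane
    exact analyticAt_const.mul ((hg.div analyticAt_const hg₀).cpow analyticAt_const hslit)
  · rw [mul_pow, Complex.cpow_nat_inv_pow _ hk, Complex.cpow_nat_inv_pow _ hk,
      mul_div_cancel₀ _ hg₀]

theorem exists_eventually_eq_add_pow (hf : AnalyticAt ℂ f z₀) (hnc : ¬EventuallyConst f (𝓝 z₀)) :
    ∃ k ≠ 0, ∃ φ : ℂ → ℂ, ∃ φ' ≠ 0, HasStrictDerivAt φ φ' z₀ ∧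
      ∀ᶠ z in 𝓝 z₀, f z = f z₀ + φ z ^ k := by
  have hne : ¬∀ᶠ z in 𝓝 z₀, f z - f z₀ = 0 := fun h =>
    hnc (eventuallyConst_iff_exists_eventuallyEq.2 ⟨f z₀, h.mono fun _ => sub_eq_zero.1⟩)
  obtain ⟨k, g, hg, hg₀, hfg⟩ :=
    (hf.sub analyticAt_const).exists_eventuallyEq_pow_smul_nonzero_iff.2 hne
  have hk : k ≠ 0 := by
    rintro rfl
    exact hg₀ (by simpa using hfg.self_of_nhds.symm)
  obtain ⟨h, hh, hpow⟩ := exists_analyticAt_pow_eq hk hg hg₀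
  have hh₀ : h z₀ ≠ 0 := fun h₀ => hg₀ (by rw [← hpow, h₀, zero_pow hk])
  have hderiv : HasStrictDerivAt (fun z => (z - z₀) * h z) (h z₀) z₀ := by
    have hsub : HasStrictDerivAt (fun z => z - z₀) 1 z₀ := (hasStrictDerivAt_id z₀).sub_const z₀
    simpa only [sub_self, zero_mul, add_zero, one_mul] using! hsub.mul hh.hasStrictDerivAt
  refine ⟨k, hk, _, h z₀, hh₀, hderiv, ?_⟩
  filter_upwards [hfg] with z hz
  rw [mul_pow, hpow, ← smul_eq_mul, ← hz, Pi.sub_apply, add_sub_cancel]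

theorem exists_preservesColoredCovers_nhds (hf : AnalyticAt ℂ f z₀)
    (hnc : ¬EventuallyConst f (𝓝 z₀)) : ∃ U ∈ 𝓝 z₀, PreservesColoredCovers f U := by
  obtain ⟨k, hk, φ, φ', hφ', hφ, hfφ⟩ := exists_eventually_eq_add_pow hf hnc
  obtain ⟨K, hK, V, hV, hbilip⟩ := exists_bilipschitzOn_of_hasStrictDerivAt hφ hφ'
  have htranslation (S : Set ℂ) : PreservesColoredCovers (f z₀ + ·) S :=
    .of_bilipschitzOn one_pos fun x _ y _ => by
      simp only [dist_add_left, one_mul, le_refl, and_self]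
  have hpow : PreservesColoredCovers (· ^ k) (φ '' V) :=
    (preservesColoredCovers_pow_univ hk).mono (subset_univ _)
  have hcomp : PreservesColoredCovers ((f z₀ + ·) ∘ (· ^ k) ∘ φ) V :=
    (htranslation _).comp (hpow.comp (.of_bilipschitzOn hK hbilip))
  exact ⟨_, inter_mem hV hfφ, (hcomp.mono inter_subset_left).congr fun z hz => hz.2.symm⟩

theorem not_eventuallyConst_of_isPreconnected {Ω : Set ℂ} (hΩ : IsPreconnected Ω)
    (hf : AnalyticOnNhd ℂ f Ω) (hnc : ¬∃ w, ∀ z ∈ Ω, f z = w) (hz₀ : z₀ ∈ Ω) :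
    ¬EventuallyConst f (𝓝 z₀) := by
  rw [eventuallyConst_iff_exists_eventuallyEq]
  rintro ⟨w, hw⟩
  exact hnc ⟨w, hf.eqOn_of_preconnected_of_eventuallyEq analyticOnNhd_const hΩ hz₀ hw⟩

end Holomorphic

theorem holomorphic_preserves_nagataDim_compactly_contained_general {f : ℂ → ℂ} {A : Set ℂ}
    (hA : IsCompact (closure A)) (hf : AnalyticOnNhd ℂ f (closure A))
    (hnc : ∀ z ∈ closure A, ¬EventuallyConst f (𝓝 z)) :
    nagataDim A = nagataDim (f '' A) := by
  have hpres : PreservesColoredCovers f (closure A) := .of_isCompact hA fun z hz =>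
    exists_preservesColoredCovers_nhds (hf z hz) (hnc z hz)
  exact (hpres.nagataDim_image subset_closure).symm

/-- **Statement 15.** A non-constant holomorphic function on a planar domain preserves
the Nagata dimension of every subset compactly contained in the domain. -/
theorem holomorphic_preserves_nagataDim_compactly_contained (Ω : Set ℂ) (hΩo : IsOpen Ω)
    (hΩc : IsConnected Ω) (f : ℂ → ℂ) (hf : DifferentiableOn ℂ f Ω)
    (hnc : ¬ ∃ w : ℂ, ∀ z ∈ Ω, f z = w)
    (A : Set ℂ) (hA : closure A ⊆ Ω) (hAc : IsCompact (closure A)) :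
    nagataDim A = nagataDim (f '' A) := by
  have hf := hf.analyticOnNhd hΩo
  exact holomorphic_preserves_nagataDim_compactly_contained_general hAc (hf.mono hA) fun z hz =>
    not_eventuallyConst_of_isPreconnected hΩc.isPreconnected hf hnc (hA hz)
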